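/- Let $G$ be a finite group of order $n$, $d \mid n$, $\Gamma = \mathrm{Gal}(\mathbb{Q}(\zeta_n)/\mathbb{Q}(\zeta_d))$ acting on $\mathrm{Irr}(G)$ by composition and on $G$ by $\sigma.g = g^{r_\sigma}$ where $\sigma(\zeta_n) = \zeta_n^{r_\sigma}$. Then the number of $\Gamma$-orbits on $\mathrm{Irr}(G)$ equals the number of $\Gamma$-orbits on the set of conjugacy classes of $G$. -/

import Mathlib

/-! Brauer's permutation lemma is applied to the character table, whose rows are the irreducible
characters over `K` and whose columns are the conjugacy classes. Since `χ g` is a sum of `n`-th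
roots of unity, `σ (χ g) = χ (g ^ r)` whenever `σ ζ = ζ ^ r`, so moving a row by `σ` has the effect
of moving the column. Vector-matrix multiplication therefore carries vectors constant on orbits of
rows to vectors constant on orbits of columns; as rows and columns are linearly independent, it
does so injectively in both directions and the two numbers of orbits agree.

Rows are independent by orthogonality. A relation between the columns gives a central element `x`
of the group algebra with trace zero on every irreducible representation. Such an `x` acts on an
irreducible `V` by an element of the center `L` of the endomorphism algebra, a finite field
extension of `K` which need not be `K` a priori. The `L`-trace of `x` is a `K`-combination of sums
of `n`-th roots of unity, hence lies in `K`, so `x` acts by a scalar of `K`, which is zero because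
the `K`-trace is. By semisimplicity `x = 0`.
-/

universe u v

section Brauer

lemma card_range_image_orbit {Γ I Y : Type*} [Group Γ] [MulAction Γ I] {φ : Set I → Set Y}
    (hφ : φ.Injective) :
    Nat.card {O | ∃ i, O = φ (MulAction.orbit Γ i)} =
      Nat.card (MulAction.orbitRel.Quotient Γ I) := by
  have hrange : {O | ∃ i, O = φ (MulAction.orbit Γ i)} =
      Set.range fun ω : MulAction.orbitRel.Quotient Γ I => φ ω.orbit := by
    ext O
    simp only [Set.mem_ofPred_eq, Set.mem_range, eq_comm (a := O)]
    exact (Quotient.mk_surjective.exists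
      (p := fun ω : MulAction.orbitRel.Quotient Γ I => φ ω.orbit = O)).symm
  rw [hrange]
  exact Nat.card_range_of_injective (hφ.comp MulAction.orbitRel.Quotient.orbit_injective)

open scoped Matrix

variable {Γ I J R : Type*} [Group Γ] [MulAction Γ I] [MulAction Γ J] [Finite I] [Finite J]
  [CommRing R] [Nontrivial R]

lemma card_orbits_le_of_linearIndependent_row {M : Matrix I J R}
    (hM : ∀ (γ : Γ) i j, M (γ • i) j = M i (γ • j)) (hrow : LinearIndependent R M.row) :
    Nat.card (MulAction.orbitRel.Quotient Γ I) ≤ Nat.card (MulAction.orbitRel.Quotient Γ J) := by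
  classical
  have := Fintype.ofFinite I
  have := Fintype.ofFinite (MulAction.orbitRel.Quotient Γ I)
  have := Fintype.ofFinite (MulAction.orbitRel.Quotient Γ J)
  let inflate : (MulAction.orbitRel.Quotient Γ I → R) →ₗ[R] I → R :=
    LinearMap.funLeft R R (Quotient.mk _)
  have hinvariant (c) (γ : Γ) (j : J) : (inflate c ᵥ* M) (γ • j) = (inflate c ᵥ* M) j := by
    refine Fintype.sum_equiv (MulAction.toPerm γ) _ _ fun i => ?_
    have horbit : inflate c (γ • i) = inflate c i :=
      congrArg c (Quotient.sound (MulAction.mem_orbit i γ))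
    rw [MulAction.toPerm_apply, horbit]
    exact congrArg _ (hM γ i j).symm
  let T : (MulAction.orbitRel.Quotient Γ I → R) →ₗ[R] MulAction.orbitRel.Quotient Γ J → R :=
    LinearMap.funLeft R R Quotient.out ∘ₗ M.vecMulLinear ∘ₗ inflate
  have hT : Function.Injective T := by
    intro c d hcd
    suffices inflate c ᵥ* M = inflate d ᵥ* M from
      LinearMap.funLeft_injective_of_surjective R R _ Quotient.mk_surjective
        (Matrix.vecMul_injective_iff.mpr hrow this)
    ext j
    obtain ⟨γ, hγ⟩ : ∃ γ : Γ, γ • j = Quotient.out (Quotient.mk (MulAction.orbitRel Γ J) j) :=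
      Quotient.mk_out (s := MulAction.orbitRel Γ J) j
    rw [← hinvariant c γ, ← hinvariant d γ, hγ]
    exact congrFun hcd _
  simpa only [Nat.card_eq_fintype_card] using card_le_of_injective R T hT

theorem card_orbits_eq_of_linearIndependent_row_col {M : Matrix I J R}
    (hM : ∀ (γ : Γ) i j, M (γ • i) j = M i (γ • j)) (hrow : LinearIndependent R M.row)
    (hcol : LinearIndependent R M.col) :
    Nat.card (MulAction.orbitRel.Quotient Γ I) = Nat.card (MulAction.orbitRel.Quotient Γ J) :=
  (card_orbits_le_of_linearIndependent_row hM hrow).antisymm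
    (card_orbits_le_of_linearIndependent_row (M := Mᵀ) (fun γ j i => (hM γ i j).symm) hcol)

end Brauer

section Trace

open Polynomial

variable {K V : Type*} [Field K] [AddCommGroup V] [Module K V] [FiniteDimensional K V]

lemma exists_trace_aeval_eq_sum {f : Module.End K V} {s : Finset K}
    (hf : aeval f (Lagrange.nodal s id) = 0) :
    ∃ m : K → ℕ, ∀ p : K[X], LinearMap.trace K V (aeval f p) = ∑ μ ∈ s, p.eval μ * m μ := by
  classical
  -- `e μ` is the projection onto the `μ`-eigenspace of `f`, so its trace is a natural number.
  let e (μ : K) : Module.End K V := aeval f (Lagrange.basis s id μ)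
  have he_sum : ∑ μ ∈ s, e μ = 1 := by
    rcases s.eq_empty_or_nonempty with rfl | hs
    · simpa [eq_comm] using hf
    · rw [← map_sum, Lagrange.sum_basis Function.injective_id.injOn hs, map_one]
  have hp_mul {μ : K} (hμ : μ ∈ s) (p : K[X]) : aeval f p * e μ = p.eval μ • e μ := by
    have hdvd : Lagrange.nodal s id ∣ (p - C (p.eval μ)) * Lagrange.basis s id μ := by
      rw [Lagrange.nodal_eq_mul_nodal_erase hμ, Lagrange.basis_eq_prod_sub_inv_mul_nodal_div hμ]
      rw [← Lagrange.nodal_erase_eq_nodal_div hμ]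
      exact mul_dvd_mul (X_sub_C_dvd_sub_C_eval) (dvd_mul_left _ _)
    obtain ⟨q, hq⟩ := hdvd
    have := congrArg (aeval f) hq
    rw [map_mul, map_mul, hf, zero_mul, map_sub, sub_mul, sub_eq_zero, aeval_C] at this
    rw [this, Algebra.algebraMap_eq_smul_one, smul_one_mul]
  have he_idem {μ : K} (hμ : μ ∈ s) : IsIdempotentElem (e μ) := by
    rw [IsIdempotentElem, hp_mul hμ]
    have := Lagrange.eval_basis_self (v := id) Function.injective_id.injOn hμ
    rw [id] at this
    rw [this, one_smul]
  refine ⟨fun μ => Module.finrank K (LinearMap.range (e μ)), fun p => ?_⟩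
  rw [← mul_one (aeval f p), ← he_sum, Finset.mul_sum, map_sum]
  refine Finset.sum_congr rfl fun μ hμ => ?_
  rw [hp_mul hμ, map_smul, smul_eq_mul,
    ((LinearMap.isProj_range_iff_isIdempotentElem _).mpr (he_idem hμ)).trace]

variable {n : ℕ} [NeZero n] {ζ : K}

lemma exists_trace_pow_eq_sum (hζ : IsPrimitiveRoot ζ n) {f : Module.End K V} (hf : f ^ n = 1) :
    ∃ m : K → ℕ, ∀ r : ℕ, LinearMap.trace K V (f ^ r) =
      ∑ μ ∈ nthRootsFinset n (1 : K), μ ^ r * m μ := by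
  have hnodal : aeval f (Lagrange.nodal (nthRootsFinset n (1 : K)) id) = 0 := by
    simp [Lagrange.nodal, ← X_pow_sub_one_eq_prod (NeZero.pos n) hζ, hf]
  obtain ⟨m, hm⟩ := exists_trace_aeval_eq_sum hnodal
  exact ⟨m, fun r => by simpa using hm (X ^ r)⟩

lemma map_trace_of_pow_eq_one (hζ : IsPrimitiveRoot ζ n) {f : Module.End K V} (hf : f ^ n = 1)
    (σ : K →+* K) {r : ℕ} (hσ : σ ζ = ζ ^ r) :
    σ (LinearMap.trace K V f) = LinearMap.trace K V (f ^ r) := by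
  obtain ⟨m, hm⟩ := exists_trace_pow_eq_sum hζ hf
  have hσ_root {μ : K} (hμ : μ ∈ nthRootsFinset n (1 : K)) : σ μ = μ ^ r := by
    obtain ⟨i, -, rfl⟩ := hζ.eq_pow_of_pow_eq_one ((mem_nthRootsFinset (NeZero.pos n) 1).mp hμ)
    rw [map_pow, hσ, pow_right_comm]
  rw [← pow_one f, hm, ← pow_mul, one_mul, hm, map_sum]
  refine Finset.sum_congr rfl fun μ hμ => ?_
  rw [map_mul, map_natCast, pow_one, hσ_root hμ]

lemma trace_mem_range_algebraMap_of_pow_eq_one {F : Type*} [Field F] [Algebra F K] {z : F}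
    (hz : IsPrimitiveRoot z n) {f : Module.End K V} (hf : f ^ n = 1) :
    LinearMap.trace K V f ∈ (algebraMap F K).range := by
  have hζ := hz.map_of_injective (algebraMap F K).injective
  obtain ⟨m, hm⟩ := exists_trace_pow_eq_sum hζ hf
  rw [← pow_one f, hm]
  refine sum_mem fun μ hμ => mul_mem ?_ (natCast_mem _ _)
  obtain ⟨i, -, rfl⟩ := hζ.eq_pow_of_pow_eq_one ((mem_nthRootsFinset (NeZero.pos n) 1).mp hμ)
  exact ⟨z ^ i, by simp⟩

end Trace

section SplittingField

open scoped MonoidAlgebra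

variable {K G : Type*} [Field K] [Group G]

lemma sum_single_mem_center [Fintype G] (c : ConjClasses G → K) :
    ∑ g, MonoidAlgebra.single g (c (ConjClasses.mk g)) ∈ Subalgebra.center K K[G] := by
  refine Subalgebra.mem_center_iff.mpr fun y => ?_
  induction y using MonoidAlgebra.induction_linear with
  | zero => simp only [zero_mul, mul_zero]
  | add y z hy hz => rw [mul_add, add_mul, hy, hz]
  | single h k =>
    simp only [Finset.sum_mul, Finset.mul_sum, MonoidAlgebra.single_mul_single]
    refine Fintype.sum_equiv (MulAut.conj h).toEquiv _ _ fun g => ?_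
    have hconj : ConjClasses.mk (h * g * h⁻¹) = ConjClasses.mk g :=
      ConjClasses.mk_eq_mk_iff_isConj.mpr (isConj_iff.mpr ⟨h, rfl⟩).symm
    simp [hconj, mul_comm k]

lemma nontrivial_of_isIrreducible {V : Type*} [AddCommGroup V] [Module K V]
    {ρ : Representation K G V} (hρ : ρ.IsIrreducible) : Nontrivial V :=
  have := (Representation.irreducible_iff_isSimpleModule_asModule ρ).mp hρ
  IsSimpleModule.nontrivial K[G] ρ.asModule

variable {n : ℕ} [NeZero n] {ζ : K}

section CommutingField

variable {L M : Type*} [Field L] [Algebra K L] [AddCommGroup M] [Module K M] [Module L M]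
  [Module K[G] M] [IsScalarTower K L M] [IsScalarTower K K[G] M] [SMulCommClass K[G] L M]
  [FiniteDimensional L M]

lemma trace_toModuleEnd_mem_range_algebraMap (hζ : IsPrimitiveRoot ζ n)
    (hG : ∀ g : G, g ^ n = 1) (x : K[G]) :
    LinearMap.trace L M (Module.toModuleEnd L M x) ∈ (algebraMap K L).range := by
  induction x using MonoidAlgebra.induction_linear with
  | zero => simpa only [map_zero] using zero_mem _
  | add x y hx hy => simpa only [map_add] using add_mem hx hy
  | single g k =>
    have hpow : Module.toModuleEnd L M (MonoidAlgebra.of K G g) ^ n = 1 := by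
      rw [← map_pow, ← map_pow, hG, map_one, map_one]
    have hsingle : Module.toModuleEnd L M (MonoidAlgebra.single g k) =
        algebraMap K L k • Module.toModuleEnd L M (MonoidAlgebra.of K G g) := by
      ext v
      simp [← smul_assoc]
    rw [hsingle, map_smul, smul_eq_mul]
    exact mul_mem ⟨k, rfl⟩ (trace_mem_range_algebraMap_of_pow_eq_one hζ hpow)

lemma mem_range_algebraMap_of_smul_eq [CharZero K] [Nontrivial M] (hζ : IsPrimitiveRoot ζ n)
    (hG : ∀ g : G, g ^ n = 1) {x : K[G]} {t : L} (ht : ∀ m : M, t • m = x • m) :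
    t ∈ (algebraMap K L).range := by
  have := charZero_of_injective_algebraMap (algebraMap K L).injective
  have hdim : (Module.finrank L M : L) ≠ 0 := Nat.cast_ne_zero.mpr Module.finrank_pos.ne'
  have hx : Module.toModuleEnd L M x = t • 1 := by
    ext m
    exact (ht m).symm
  have htrace := trace_toModuleEnd_mem_range_algebraMap (L := L) (M := M) hζ hG x
  rw [hx, map_smul, LinearMap.trace_one, smul_eq_mul] at htrace
  obtain ⟨c, hc⟩ := htrace
  exact ⟨c / Module.finrank L M, by rw [map_div₀, map_natCast, hc, mul_div_cancel_right₀ _ hdim]⟩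

end CommutingField

variable [CharZero K] {V : Type*} [AddCommGroup V] [Module K V] [FiniteDimensional K V]
  {ρ : Representation K G V}

lemma exists_asAlgebraHom_eq_smul_one (hζ : IsPrimitiveRoot ζ n) (hG : ∀ g : G, g ^ n = 1)
    (hρ : ρ.IsIrreducible) {x : K[G]} (hx : x ∈ Subalgebra.center K K[G]) :
    ∃ c : K, ρ.asAlgebraHom x = c • 1 := by
  classical
  have : IsSimpleModule K[G] ρ.asModule :=
    (Representation.irreducible_iff_isSimpleModule_asModule ρ).mp hρ
  have : Nontrivial ρ.asModule := IsSimpleModule.nontrivial K[G] ρ.asModule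
  let L := Subalgebra.center K (Module.End K[G] ρ.asModule)
  let _ : Field L := fieldOfFiniteDimensional K L
  have : IsScalarTower K L ρ.asModule := ⟨fun _ _ _ => rfl⟩
  have : SMulCommClass K[G] L ρ.asModule := ⟨fun y l v => (l.1.map_smul y v).symm⟩
  have : FiniteDimensional L ρ.asModule := FiniteDimensional.right K L ρ.asModule
  let T : Module.End K[G] ρ.asModule :=
    { toFun v := x • v
      map_add' := smul_add x
      map_smul' y v := by
        rw [RingHom.id_apply, smul_smul, smul_smul, Subalgebra.mem_center_iff.mp hx y] }
  have hT : T ∈ L := Subalgebra.mem_center_iff.mpr fun b => LinearMap.ext fun v => b.map_smul x v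
  obtain ⟨c, hc⟩ := mem_range_algebraMap_of_smul_eq (M := ρ.asModule) (x := x)
    (t := (⟨T, hT⟩ : L)) hζ hG fun _ => rfl
  refine ⟨c, ?_⟩
  ext v
  exact (congrArg (fun l : L => l • (show ρ.asModule from v)) hc).symm

lemma asAlgebraHom_eq_zero_of_trace_eq_zero (hζ : IsPrimitiveRoot ζ n) (hG : ∀ g : G, g ^ n = 1)
    (hρ : ρ.IsIrreducible) {x : K[G]} (hx : x ∈ Subalgebra.center K K[G])
    (htrace : LinearMap.trace K V (ρ.asAlgebraHom x) = 0) : ρ.asAlgebraHom x = 0 := by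
  have := nontrivial_of_isIrreducible hρ
  have hdim : (Module.finrank K V : K) ≠ 0 := Nat.cast_ne_zero.mpr Module.finrank_pos.ne'
  obtain ⟨c, hc⟩ := exists_asAlgebraHom_eq_smul_one hζ hG hρ hx
  rw [hc, map_smul, LinearMap.trace_one, smul_eq_mul] at htrace
  rw [hc, (mul_eq_zero.mp htrace).resolve_right hdim, zero_smul]

end SplittingField

section Semisimple

open scoped MonoidAlgebra

section ModuleToRepresentation

variable {K G M : Type*} [CommSemiring K] [Monoid G] [AddCommMonoid M] [Module K M]
  [Module K[G] M] [IsScalarTower K K[G] M]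

lemma asAlgebraHom_ofModule'_apply (x : K[G]) (m : M) :
    (Representation.ofModule' (k := K) (G := G) M).asAlgebraHom x m = x • m :=
  LinearMap.congr_fun
    (AlgHom.congr_fun ((MonoidAlgebra.lift K (M →ₗ[K] M) G).apply_symm_apply _) x) m

end ModuleToRepresentation

variable {K : Type u} {G : Type v} [Field K] [Group G]

lemma isIrreducible_ofModule' {M : Type*} [AddCommGroup M] [Module K M] [Module K[G] M]
    [IsScalarTower K K[G] M] [IsSimpleModule K[G] M] :
    (Representation.ofModule' (k := K) (G := G) M).IsIrreducible := by
  let ρ : Representation K G M := Representation.ofModule' M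
  let e : ρ.asModule ≃ₗ[K[G]] M :=
    { ρ.asModuleEquiv.toAddEquiv with map_smul' := asAlgebraHom_ofModule'_apply (M := M) }
  exact (Representation.irreducible_iff_isSimpleModule_asModule ρ).mpr (IsSimpleModule.congr e)

variable [Finite G] [NeZero (Nat.card G : K)]

lemma eq_zero_of_forall_asAlgebraHom_eq_zero {x : K[G]}
    (hx : ∀ (V : Type (max u v)) [AddCommGroup V] [Module K V] [FiniteDimensional K V]
      (ρ : Representation K G V), ρ.IsIrreducible → ρ.asAlgebraHom x = 0) : x = 0 := by
  suffices ∀ y : K[G], x * y = 0 by simpa only [mul_one] using this 1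
  intro y
  have hy : y ∈ ⨆ S : {S : Submodule K[G] K[G] | IsSimpleModule K[G] S}, S.1 := by
    rw [← sSup_eq_iSup', IsSemisimpleModule.sSup_simples_eq_top]
    trivial
  induction hy using Submodule.iSup_induction' with
  | mem S y hy =>
    have : IsSimpleModule K[G] S.1 := S.2
    have hS : x • (⟨y, hy⟩ : S.1) = 0 := by
      rw [← asAlgebraHom_ofModule'_apply, hx S.1 _ isIrreducible_ofModule', LinearMap.zero_apply]
    exact congrArg Subtype.val hS
  | zero => rw [mul_zero]
  | add y z _ _ hy hz => rw [mul_add, hy, hz, add_zero]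

end Semisimple

section Simple

open CategoryTheory

variable {K : Type u} {G : Type v} [Field K] [Group G] {V W : FDRep K G}

lemma mono_iff_injective_forget₂_map (f : V ⟶ W) :
    Mono f ↔ Function.Injective ((forget₂ (FDRep K G) (Rep K G)).map f).hom := by
  rw [← Rep.mono_iff_injective, Functor.mono_map_iff_mono]

lemma isIso_iff_bijective_forget₂_map (f : V ⟶ W) :
    IsIso f ↔ Function.Bijective ((forget₂ (FDRep K G) (Rep K G)).map f).hom := by
  rw [← isIso_iff_of_reflects_iso f (forget₂ (FDRep K G) (Rep K G)),
    ← isIso_iff_of_reflects_iso _ (forget (Rep K G)), isIso_iff_bijective]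
  rfl

lemma eq_zero_iff_forget₂_map_eq_zero (f : V ⟶ W) :
    f = 0 ↔ ((forget₂ (FDRep K G) (Rep K G)).map f).hom = 0 := by
  refine ⟨fun h => by rw [h]; rfl, fun h => ?_⟩
  exact (forget₂ (FDRep K G) (Rep K G)).map_injective (Rep.hom_ext h)

lemma simple_of_isIrreducible (hV : Representation.IsIrreducible V.ρ) : Simple V := by
  refine ⟨fun {Y} f _ => ?_⟩
  let φ : Representation.IntertwiningMap Y.ρ V.ρ := ((forget₂ (FDRep K G) (Rep K G)).map f).hom
  have hinj : Function.Injective φ := (mono_iff_injective_forget₂_map f).mp ‹_›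
  have hsurj : Function.Surjective φ ↔ φ ≠ 0 := by
    have := nontrivial_of_isIrreducible hV
    refine ⟨?_, (Representation.IsIrreducible.surjective_or_eq_zero φ).resolve_right⟩
    rintro h h0
    obtain ⟨v, hv⟩ := exists_ne (0 : V)
    obtain ⟨y, hy⟩ := h v
    rw [h0] at hy
    exact hv hy.symm
  rw [isIso_iff_bijective_forget₂_map, ne_eq, eq_zero_iff_forget₂_map_eq_zero]
  exact ⟨fun h => hsurj.mp h.2, fun h => ⟨hinj, hsurj.mpr h⟩⟩

lemma isIrreducible_of_simple [Simple V] : Representation.IsIrreducible V.ρ := by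
  have : Nontrivial (Subrepresentation (V.ρ : Representation K G V)) := by
    refine ⟨⊥, ⊤, fun h => id_nonzero V ((eq_zero_iff_forget₂_map_eq_zero _).mpr ?_)⟩
    ext v
    exact (h ▸ trivial : v ∈ (⊥ : Subrepresentation V.ρ))
  refine ⟨fun W => ?_⟩
  let i : FDRep.of W.toRepresentation ⟶ V := FDRep.forget₂HomLinearEquiv _ _
    (Rep.ofHom ⟨W.toSubmodule.subtype, fun _ => rfl⟩)
  have : Mono i := (mono_iff_injective_forget₂_map i).mpr Subtype.val_injective
  by_cases hi : i = 0
  · left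
    refine eq_bot_iff.mpr fun w hw => ?_
    exact DFunLike.congr_fun ((eq_zero_iff_forget₂_map_eq_zero i).mp hi) (⟨w, hw⟩ : W.toSubmodule)
  · right
    refine eq_top_iff.mpr fun v _ => ?_
    obtain ⟨w, rfl⟩ :=
      ((isIso_iff_bijective_forget₂_map i).mp (isIso_of_mono_of_nonzero hi)).surjective v
    exact w.2

end Simple

section Twist

variable {K L G V W : Type*} [Field K] [Field L] [Group G] [AddCommGroup V] [Module K V]
  [AddCommGroup W] [Module L W] {ρ : Representation K G V} {τ : Representation L G W}

lemma isIrreducible_of_semilinearEquiv {σ : K →+* L} {σ' : L →+* K} [RingHomInvPair σ σ']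
    [RingHomInvPair σ' σ] (e : V ≃ₛₗ[σ] W) (he : ∀ g v, e (ρ g v) = τ g (e v))
    (hρ : ρ.IsIrreducible) : τ.IsIrreducible := by
  have he_symm (g : G) (w : W) : e.symm (τ g w) = ρ g (e.symm w) := by
    rw [LinearEquiv.symm_apply_eq, he, LinearEquiv.apply_symm_apply]
  let E : Subrepresentation τ ≃o Subrepresentation ρ :=
    { toFun U := ⟨U.toSubmodule.comap e.toLinearMap, fun g v hv => by
        simpa [he] using U.apply_mem_toSubmodule g hv⟩
      invFun U := ⟨U.toSubmodule.comap e.symm.toLinearMap, fun g w hw => by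
        simpa [he_symm] using U.apply_mem_toSubmodule g hw⟩
      left_inv U := by ext; simp
      right_inv U := by ext; simp
      map_rel_iff' {U U'} :=
        (e.surjective.forall (p := fun w => w ∈ U.toSubmodule → w ∈ U'.toSubmodule)).symm }
  exact (OrderIso.isSimpleOrder_iff E).mpr hρ

lemma exists_isIrreducible_character_eq_comp [FiniteDimensional K V] (hρ : ρ.IsIrreducible)
    (σ : K ≃+* L) :
    ∃ (n : ℕ) (τ : Representation L G (Fin n → L)),
      τ.IsIrreducible ∧ τ.character = σ ∘ ρ.character := by
  let b := Module.finBasis K V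
  have := RingHomInvPair.of_ringEquiv σ
  have := RingHomInvPair.symm (σ : K →+* L) σ.symm
  let twist : Module.End K V →* Module.End L (Fin (Module.finrank K V) → L) :=
    (Matrix.toLinAlgEquiv' : _ ≃ₐ[L] _).toMonoidHom.comp
      ((σ : K →+* L).mapMatrix.toMonoidHom.comp (LinearMap.toMatrixAlgEquiv b).toMonoidHom)
  have htwist (f : Module.End K V) :
      twist f = Matrix.toLin' ((LinearMap.toMatrix b b f).map σ) := rfl
  let e : V ≃ₛₗ[(σ : K →+* L)] (Fin (Module.finrank K V) → L) :=
    { b.equivFun.toAddEquiv.trans (AddEquiv.piCongrRight fun _ => σ.toAddEquiv) with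
      map_smul' k v := by ext; simp }
  have he (f : Module.End K V) (v : V) : e (f v) = twist f (e v) := by
    ext i
    have hv : b.repr (f v) i = _ := (congrFun (LinearMap.toMatrix_mulVec_repr b b f v) i).symm
    change σ (b.repr (f v) i) = _
    rw [hv, htwist, Matrix.toLin'_apply]
    exact RingHom.map_mulVec (σ : K →+* L) _ _ i
  refine ⟨_, twist.comp ρ, isIrreducible_of_semilinearEquiv e (fun g => he (ρ g)) hρ, ?_⟩
  ext g
  change LinearMap.trace L _ (twist (ρ g)) = σ (LinearMap.trace K V (ρ g))
  rw [htwist, Matrix.trace_toLin'_eq, LinearMap.trace_eq_matrix_trace K b]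
  exact (AddMonoidHom.map_trace (σ : K →+* L).toAddMonoidHom _).symm

end Twist

section IrreducibleCharacters

open CategoryTheory

/-- The set `Irr(G)` of characters of irreducible representations of `G` over `K`, as functions
on `G`. The field `K` is not assumed to be algebraically closed. -/
def irreducibleCharacters (K : Type u) (G : Type v) [Field K] [Group G] : Set (G → K) :=
  {f | ∃ V : FDRep K G, Simple V ∧ f = V.character}

variable {K : Type u} {G : Type v} [Field K] [Group G]

lemma comp_character_mem_irreducibleCharacters {L V : Type*} [Field L] [AddCommGroup V]
    [Module L V] [FiniteDimensional L V] {ρ : Representation L G V} (hρ : ρ.IsIrreducible)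
    (σ : L ≃+* K) : σ ∘ ρ.character ∈ irreducibleCharacters K G := by
  obtain ⟨_, τ, hτ, hcharacter⟩ := exists_isIrreducible_character_eq_comp hρ σ
  exact ⟨FDRep.of τ, simple_of_isIrreducible hτ, hcharacter.symm⟩

lemma smul_mem_irreducibleCharacters {F : Type*} [CommSemiring F] [Algebra F K] (σ : K ≃ₐ[F] K)
    {f : G → K} (hf : f ∈ irreducibleCharacters K G) : σ • f ∈ irreducibleCharacters K G := by
  obtain ⟨V, _, rfl⟩ := hf
  exact comp_character_mem_irreducibleCharacters isIrreducible_of_simple σ.toRingEquiv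

/-- The Galois action on irreducible characters, by composition. -/
instance {F : Type*} [CommSemiring F] [Algebra F K] :
    MulAction (K ≃ₐ[F] K) (irreducibleCharacters K G) :=
  SubMulAction.mulAction ⟨_, fun σ _ hf => smul_mem_irreducibleCharacters σ hf⟩

lemma apply_eq_of_mem_irreducibleCharacters {f : G → K} (hf : f ∈ irreducibleCharacters K G)
    {g h : G} (hgh : IsConj g h) : f g = f h := by
  obtain ⟨V, -, rfl⟩ := hf
  obtain ⟨c, rfl⟩ := isConj_iff.mp hgh
  exact (V.char_conj g c).symm

lemma map_apply_of_mem_irreducibleCharacters {n : ℕ} [NeZero n] {ζ : K} (hζ : IsPrimitiveRoot ζ n)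
    (hG : ∀ g : G, g ^ n = 1) {f : G → K} (hf : f ∈ irreducibleCharacters K G) (σ : K →+* K)
    {r : ℕ} (hσ : σ ζ = ζ ^ r) (g : G) : σ (f g) = f (g ^ r) := by
  obtain ⟨V, -, rfl⟩ := hf
  have hg : V.ρ g ^ n = 1 := by rw [← map_pow, hG, map_one]
  rw [FDRep.character, FDRep.character, map_pow]
  exact map_trace_of_pow_eq_one hζ hg σ hσ

lemma sum_character_mul_character_inv [Fintype G] [NeZero (Nat.card G : K)] (V W : FDRep K G) :
    ∑ g, V.character g * W.character g⁻¹ = Nat.card G * Module.finrank K (W ⟶ V) := by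
  have hcard : (Nat.card G : K) ≠ 0 := NeZero.ne _
  have := invertibleOfNonzero hcard
  rw [← FDRep.scalar_product_char_eq_finrank_equivariant, mul_inv_cancel_left₀ hcard]

variable [CharZero K] [Finite G]

theorem linearIndependent_irreducibleCharacters :
    LinearIndependent K (Subtype.val : irreducibleCharacters K G → G → K) := by
  have := Fintype.ofFinite G
  let B : LinearMap.BilinForm K (G → K) := LinearMap.mk₂ K (fun f h => ∑ g, f g * h g⁻¹)
    (by simp [add_mul, Finset.sum_add_distrib]) (by simp [mul_assoc, Finset.mul_sum])
    (by simp [mul_add, Finset.sum_add_distrib]) (by simp [mul_left_comm, Finset.mul_sum])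
  refine LinearMap.BilinForm.linearIndependent_of_iIsOrtho (B := B) ?_ ?_
  · rintro ⟨_, V, _, rfl⟩ ⟨_, W, _, rfl⟩ hne
    have hiso (e : W ≅ V) : False := hne (Subtype.ext (FDRep.char_iso e).symm)
    refine (sum_character_mul_character_inv V W).trans ?_
    rw [finrank_hom_simple_simple_eq_zero_of_not_iso K hiso, Nat.cast_zero, mul_zero]
  · rintro ⟨_, V, _, rfl⟩
    have : Nontrivial (V ⟶ V) := ⟨𝟙 V, 0, id_nonzero V⟩
    refine (sum_character_mul_character_inv V V).trans_ne (mul_ne_zero ?_ ?_)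
    · exact Nat.cast_ne_zero.mpr Nat.card_pos.ne'
    · exact Nat.cast_ne_zero.mpr Module.finrank_pos.ne'

instance : Finite (irreducibleCharacters K G) :=
  linearIndependent_irreducibleCharacters.finite

end IrreducibleCharacters

section CharacterTable

open scoped MonoidAlgebra

/-- The character table of `G` over `K`: its entry at `(χ, C)` is the value of `χ` on `C`. -/
def characterTable (K : Type u) (G : Type v) [Field K] [Group G] :
    Matrix (irreducibleCharacters K G) (ConjClasses G) K :=
  fun χ => Quotient.lift χ.1 fun _ _ => apply_eq_of_mem_irreducibleCharacters χ.2

variable {K : Type u} {G : Type v} [Field K] [CharZero K] [Group G] [Finite G]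

lemma linearIndependent_row_characterTable : LinearIndependent K (characterTable K G).row :=
  LinearIndependent.of_comp (LinearMap.funLeft K K ConjClasses.mk)
    linearIndependent_irreducibleCharacters

variable {n : ℕ} [NeZero n] {ζ : K}

lemma eq_zero_of_forall_sum_mul_irreducibleCharacter_eq_zero [Fintype G]
    (hζ : IsPrimitiveRoot ζ n) (hG : ∀ g : G, g ^ n = 1) (c : ConjClasses G → K)
    (hc : ∀ χ ∈ irreducibleCharacters K G, ∑ g, c (ConjClasses.mk g) * χ g = 0) : c = 0 := by
  let x : K[G] := ∑ g, MonoidAlgebra.single g (c (ConjClasses.mk g))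
  have hx : x = 0 := by
    refine eq_zero_of_forall_asAlgebraHom_eq_zero fun V _ _ _ ρ hρ => ?_
    refine asAlgebraHom_eq_zero_of_trace_eq_zero hζ hG hρ (sum_single_mem_center c) ?_
    have hρ_mem : ρ.character ∈ irreducibleCharacters K G :=
      comp_character_mem_irreducibleCharacters hρ (RingEquiv.refl K)
    simpa [x, Representation.character] using hc _ hρ_mem
  classical
  ext C
  obtain ⟨g, rfl⟩ := ConjClasses.mk_surjective C
  have := congrArg (fun y : K[G] => y.coeff g) hx
  simpa [x, Finsupp.single_apply] using this

lemma linearIndependent_col_characterTable (hζ : IsPrimitiveRoot ζ n) (hG : ∀ g : G, g ^ n = 1) :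
    LinearIndependent K (characterTable K G).col := by
  classical
  have := Fintype.ofFinite G
  have := Fintype.ofFinite (ConjClasses G)
  refine Fintype.linearIndependent_iff.mpr fun d hd => ?_
  let size (C : ConjClasses G) : K := (Finset.univ.filter fun g => ConjClasses.mk g = C).card
  have hsize (C : ConjClasses G) : size C ≠ 0 := by
    obtain ⟨g, rfl⟩ := ConjClasses.mk_surjective C
    exact Nat.cast_ne_zero.mpr (Finset.card_ne_zero_of_mem (a := g) (by simp))
  have hd_div : (fun C => d C / size C) = 0 := by
    refine eq_zero_of_forall_sum_mul_irreducibleCharacter_eq_zero hζ hG _ fun χ hχ => ?_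
    have hfiber := Finset.sum_fiberwise' Finset.univ ConjClasses.mk
      fun C => d C / size C * characterTable K G ⟨χ, hχ⟩ C
    refine hfiber.symm.trans (.trans ?_ (congrFun hd ⟨χ, hχ⟩))
    rw [Finset.sum_apply]
    refine Finset.sum_congr rfl fun C _ => ?_
    rw [Finset.sum_const, nsmul_eq_mul, ← mul_assoc, mul_div_cancel₀ _ (hsize C)]
    rfl
  intro C
  exact (div_eq_zero_iff.mp (congrFun hd_div C)).resolve_right (hsize C)

end CharacterTable

section Galois

variable {G : Type v} [Group G] {n : ℕ}

/-- The action of the units modulo `n` on the conjugacy classes of a group of exponent dividing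
`n`, where `u` sends the class of `g` to the class of `g ^ u`. It is not an instance because the
exponent hypothesis cannot be inferred. -/
@[reducible] def powConjClassesMulAction (hG : ∀ g : G, g ^ n = 1) :
    MulAction (ZMod n)ˣ (ConjClasses G) where
  smul u := Quotient.map (· ^ u.val.val) fun _ _ h => h.pow _
  one_smul := Quotient.ind fun g => congrArg ConjClasses.mk <| show g ^ _ = g by
    rw [Units.val_one, ZMod.val_one_eq_one_mod, ← pow_eq_pow_mod 1 (hG g), pow_one]
  mul_smul u w := Quotient.ind fun g => congrArg ConjClasses.mk <|
    show g ^ _ = (g ^ w.val.val) ^ u.val.val by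
      rw [Units.val_mul, ZMod.val_mul, ← pow_eq_pow_mod _ (hG g), ← pow_mul, mul_comm]

variable {K : Type u} {F : Type*} [Field K] [CommRing F] [Algebra F K] [NeZero n] {ζ : K}

/-- The action of `K ≃ₐ[F] K` on the conjugacy classes of `G` through the cyclotomic character:
`σ` sends the class of `g` to the class of `g ^ r`, where `σ ζ = ζ ^ r`. -/
@[reducible] noncomputable def galoisConjClassesMulAction (F : Type*) [CommRing F] [Algebra F K]
    (hζ : IsPrimitiveRoot ζ n) (hG : ∀ g : G, g ^ n = 1) :
    MulAction (K ≃ₐ[F] K) (ConjClasses G) :=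
  let _ := powConjClassesMulAction hG
  MulAction.compHom _ (hζ.autToPow F)

lemma galois_smul_mk (hζ : IsPrimitiveRoot ζ n) (hG : ∀ g : G, g ^ n = 1) {σ : K ≃ₐ[F] K} {r : ℕ}
    (hσ : σ ζ = ζ ^ r) (g : G) :
    letI := galoisConjClassesMulAction F hζ hG
    σ • ConjClasses.mk g = ConjClasses.mk (g ^ r) := by
  have hr : (hζ.autToPow F σ).val.val = r % n := by
    refine hζ.pow_inj (ZMod.val_lt _) (Nat.mod_lt _ (NeZero.pos n)) ?_
    rw [hζ.autToPow_spec F, hσ, ← pow_eq_pow_mod r hζ.pow_eq_one]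
  exact congrArg ConjClasses.mk <| show g ^ _ = g ^ r by rw [hr, ← pow_eq_pow_mod r (hG g)]

lemma characterTable_smul (hζ : IsPrimitiveRoot ζ n) (hG : ∀ g : G, g ^ n = 1) (σ : K ≃ₐ[F] K)
    (χ : irreducibleCharacters K G) (C : ConjClasses G) :
    letI := galoisConjClassesMulAction F hζ hG
    characterTable K G (σ • χ) C = characterTable K G χ (σ • C) := by
  obtain ⟨g, rfl⟩ := ConjClasses.mk_surjective C
  have hσ : σ ζ = ζ ^ (hζ.autToPow F σ).val.val := (hζ.autToPow_spec F σ).symm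
  rw [galois_smul_mk hζ hG hσ]
  exact map_apply_of_mem_irreducibleCharacters hζ hG χ.2 σ.toRingEquiv.toRingHom hσ g

lemma image_orbit_irreducibleCharacters (Γ : Subgroup (K ≃ₐ[F] K))
    (χ : irreducibleCharacters K G) :
    Subtype.val '' MulAction.orbit Γ χ = {h | ∃ σ ∈ Γ, h = ⇑σ ∘ χ.1} := by
  ext h
  constructor
  · rintro ⟨_, ⟨γ, rfl⟩, rfl⟩
    exact ⟨γ.1, γ.2, rfl⟩
  · rintro ⟨σ, hσ, rfl⟩
    exact ⟨_, ⟨⟨σ, hσ⟩, rfl⟩, rfl⟩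

lemma preimage_orbit_conjClasses (hζ : IsPrimitiveRoot ζ n) (hG : ∀ g : G, g ^ n = 1)
    (Γ : Subgroup (K ≃ₐ[F] K)) (g : G) :
    letI := galoisConjClassesMulAction F hζ hG
    ConjClasses.mk ⁻¹' MulAction.orbit Γ (ConjClasses.mk g) =
      {h | ∃ (σ : K ≃ₐ[F] K) (r : ℕ), σ ∈ Γ ∧ σ ζ = ζ ^ r ∧ IsConj (g ^ r) h} := by
  ext h
  constructor
  · rintro ⟨γ, hγ⟩
    exact ⟨γ.1, _, γ.2, (hζ.autToPow_spec F γ.1).symm, ConjClasses.mk_eq_mk_iff_isConj.mp hγ⟩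
  · rintro ⟨σ, r, hσ, hr, hconj⟩
    exact ⟨⟨σ, hσ⟩,
      (galois_smul_mk hζ hG hr g).trans (ConjClasses.mk_eq_mk_iff_isConj.mpr hconj)⟩

theorem card_orbits_irreducibleCharacters_eq_card_orbits_conjClasses [CharZero K] [Finite G]
    (hζ : IsPrimitiveRoot ζ n) (hG : ∀ g : G, g ^ n = 1) (Γ : Subgroup (K ≃ₐ[F] K)) :
    letI := galoisConjClassesMulAction F hζ hG
    Nat.card (MulAction.orbitRel.Quotient Γ (irreducibleCharacters K G)) =
      Nat.card (MulAction.orbitRel.Quotient Γ (ConjClasses G)) :=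
  let _ := galoisConjClassesMulAction F hζ hG
  card_orbits_eq_of_linearIndependent_row_col
    (fun (γ : Γ) χ C => characterTable_smul hζ hG γ.1 χ C)
    linearIndependent_row_characterTable (linearIndependent_col_characterTable hζ hG)

end Galois

theorem stmt14_general {K : Type u} {G : Type v} {F : Type*} [Field K] [CharZero K] [CommRing F]
    [Algebra F K] [Group G] [Finite G] {n : ℕ} [NeZero n] {ζ : K} (hζ : IsPrimitiveRoot ζ n)
    (hG : ∀ g : G, g ^ n = 1) (Γ : Subgroup (K ≃ₐ[F] K)) :
    Nat.card {O : Set (G → K) |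
        ∃ f : G → K, (∃ V : FDRep K G, CategoryTheory.Simple V ∧ f = V.character) ∧
          O = {h | ∃ σ ∈ Γ, h = ⇑σ ∘ f}} =
      Nat.card {O : Set G | ∃ g : G,
        O = {h | ∃ (σ : K ≃ₐ[F] K) (r : ℕ), σ ∈ Γ ∧ σ ζ = ζ ^ r ∧ IsConj (g ^ r) h}} := by
  let _ := galoisConjClassesMulAction F hζ hG
  have hcharacters := card_range_image_orbit (Γ := Γ) (I := irreducibleCharacters K G)
    Subtype.val_injective.image_injective
  have hclasses := card_range_image_orbit (Γ := Γ) (I := ConjClasses G)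
    ConjClasses.mk_surjective.preimage_injective
  rw [← card_orbits_irreducibleCharacters_eq_card_orbits_conjClasses hζ hG, ← hcharacters]
    at hclasses
  simp only [image_orbit_irreducibleCharacters, Subtype.exists, exists_prop,
    ConjClasses.mk_surjective.exists, preimage_orbit_conjClasses] at hclasses
  exact hclasses.symm

theorem stmt14 (G : Type) [Group G] [Fintype G] (n d : ℕ+)
    (hcard : Fintype.card G = (n : ℕ)) (hd : (d : ℕ) ∣ (n : ℕ))
    (ζ : CyclotomicField n ℚ) (hζ : IsPrimitiveRoot ζ (n : ℕ)) :
    let zd := ζ ^ ((n : ℕ) / (d : ℕ))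
    Nat.card {O : Set (G → CyclotomicField n ℚ) |
        ∃ f : G → CyclotomicField n ℚ,
          (∃ V : FDRep (CyclotomicField n ℚ) G,
            CategoryTheory.Simple V ∧ f = V.character) ∧
          O = {h | ∃ σ : CyclotomicField n ℚ ≃ₐ[ℚ] CyclotomicField n ℚ,
            σ zd = zd ∧ h = ⇑σ ∘ f}} =
      Nat.card {O : Set G | ∃ g : G,
        O = {h | ∃ (σ : CyclotomicField n ℚ ≃ₐ[ℚ] CyclotomicField n ℚ) (r : ℕ),
          σ zd = zd ∧ σ ζ = ζ ^ r ∧ IsConj (g ^ r) h}} :=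
  stmt14_general hζ (fun _ => hcard ▸ pow_card_eq_one)
    (MulAction.stabilizer (CyclotomicField n ℚ ≃ₐ[ℚ] CyclotomicField n ℚ) (ζ ^ ((n : ℕ) / (d : ℕ))))
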